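/- Let F be a finite field with |F| = q. In the symplectic graph Sp(4,q), every vertex is a regular point in the elementary sense: for every vertex v and every vertex x with x ≠ v and x not adjacent to v, the span {v,x}^{⊥⊥} has exactly q+1 elements and is a coclique (no two of its elements are adjacent). -/

import Mathlib

open scoped Classical LinearAlgebra.Projectivization

/-- The symplectic form on `F^4` given by `u₀w₁ − u₁w₀ + u₂w₃ − u₃w₂`. -/
def sympForm {F : Type} [Field F] (u w : Fin 4 → F) : F :=
  u 0 * w 1 - u 1 * w 0 + u 2 * w 3 - u 3 * w 2

/-- The symplectic graph `Sp(4,q)`. -/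
def spGraph (F : Type) [Field F] : SimpleGraph (ℙ F (Fin 4 → F)) :=
  SimpleGraph.fromRel (fun x y => sympForm x.rep y.rep = 0)

noncomputable instance (F : Type) [Field F] [Fintype F] : Fintype (ℙ F (Fin 4 → F)) :=
  have : Finite (ℙ F (Fin 4 → F)) := Quotient.finite _
  Fintype.ofFinite _

/-- For a graph `G` and a set `X` of vertices, `X^⊥` is the set of vertices `w` such that
for every `x ∈ X`, either `w = x` or `w` is adjacent to `x`. -/
def perp {V : Type*} (G : SimpleGraph V) (X : Set V) : Set V :=
  {w | ∀ x ∈ X, w = x ∨ G.Adj w x}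

theorem sf_self {F : Type} [Field F] (u : Fin 4 → F) : sympForm u u = 0 := by
  unfold sympForm; ring

theorem sf_swap {F : Type} [Field F] (u w : Fin 4 → F) : sympForm u w = - sympForm w u := by
  unfold sympForm; ring

theorem sf_comb {F : Type} [Field F] (u w z : Fin 4 → F) (s t : F) :
    sympForm (s • u + t • w) z = s * sympForm u z + t * sympForm w z := by
  simp only [sympForm, Pi.add_apply, Pi.smul_apply, smul_eq_mul]; ring

theorem sf_smul {F : Type} [Field F] (u z : Fin 4 → F) (s : F) :
    sympForm (s • u) z = s * sympForm u z := by
  simp only [sympForm, Pi.smul_apply, smul_eq_mul]; ring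

theorem sf_rel {F : Type} [Field F] (w x : ℙ F (Fin 4 → F)) :
    (w = x ∨ (spGraph F).Adj w x) ↔ sympForm w.rep x.rep = 0 := by
  rw [spGraph, SimpleGraph.fromRel_adj]
  constructor
  · rintro (h | ⟨_, h | h⟩)
    · subst h; exact sf_self _
    · exact h
    · rw [sf_swap, h, neg_zero]
  · intro h
    by_cases e : w = x
    · exact Or.inl e
    · exact Or.inr ⟨e, Or.inl h⟩

theorem sf_mk {F : Type} [Field F] (z w : Fin 4 → F) (hz : z ≠ 0) :
    sympForm (Projectivization.mk F z hz).rep w = 0 ↔ sympForm z w = 0 := by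
  obtain ⟨s, hs⟩ := Projectivization.exists_smul_eq_mk_rep F z hz
  rw [← hs, Units.smul_def, sf_smul]
  simp

theorem sf_nondeg {F : Type} [Field F] (u : Fin 4 → F) (h : ∀ z, sympForm u z = 0) : u = 0 := by
  have h0 := h ![1,0,0,0]
  have h1 := h ![0,1,0,0]
  have h2 := h ![0,0,1,0]
  have h3 := h ![0,0,0,1]
  simp [sympForm] at h0 h1 h2 h3
  ext i
  fin_cases i <;> simp [h0, h1, h2, h3]

theorem sf_span {F : Type} [Field F] (v x : ℙ F (Fin 4 → F))
    (hc : sympForm v.rep x.rep ≠ 0) (y : ℙ F (Fin 4 → F)) :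
    y ∈ perp (spGraph F) (perp (spGraph F) {v, x}) ↔
      ∃ s t : F, y.rep = s • v.rep + t • x.rep := by
  have hp : ∀ w, w ∈ perp (spGraph F) {v, x} ↔
      sympForm w.rep v.rep = 0 ∧ sympForm w.rep x.rep = 0 := by
    intro w
    simp only [perp, Set.mem_ofPred_eq, sf_rel, Set.mem_insert_iff, Set.mem_singleton_iff,
      forall_eq_or_imp, forall_eq]
  have hm : y ∈ perp (spGraph F) (perp (spGraph F) {v, x}) ↔
      ∀ w : ℙ F (Fin 4 → F), (sympForm w.rep v.rep = 0 ∧ sympForm w.rep x.rep = 0) → sympForm y.rep w.rep = 0 := by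
    conv_lhs => rw [perp]
    simp only [Set.mem_ofPred_eq, sf_rel, hp]
  rw [hm]
  constructor
  · intro h
    have key : ∀ z, sympForm z v.rep = 0 → sympForm z x.rep = 0 → sympForm y.rep z = 0 := by
      intro z h1 h2
      by_cases hz : z = 0
      · subst hz; simp [sympForm]
      · have := h (Projectivization.mk F z hz) ⟨(sf_mk _ _ hz).2 h1, (sf_mk _ _ hz).2 h2⟩
        rw [sf_swap, neg_eq_zero, sf_mk, sf_swap, neg_eq_zero] at this
        exact this
    generalize y.rep = u at *
    generalize v.rep = a at *
    generalize x.rep = b at *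
    refine ⟨sympForm u b / sympForm a b, sympForm a u / sympForm a b, ?_⟩
    rw [← sub_eq_zero]
    apply sf_nondeg
    intro z
    have k := key (sympForm a b • z - (sympForm z b • a + sympForm a z • b))
      (by simp only [sympForm, Pi.add_apply, Pi.sub_apply, Pi.smul_apply, smul_eq_mul]; ring)
      (by simp only [sympForm, Pi.add_apply, Pi.sub_apply, Pi.smul_apply, smul_eq_mul]; ring)
    have e1 : sympForm u (sympForm a b • z - (sympForm z b • a + sympForm a z • b)) =
        sympForm a b * sympForm u z - sympForm z b * sympForm u a - sympForm a z * sympForm u b := by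
      generalize sympForm a b = p, sympForm z b = p', sympForm a z = p''
      simp only [sympForm, Pi.add_apply, Pi.sub_apply, Pi.smul_apply, smul_eq_mul]; ring
    have e2 : ∀ p r : F, sympForm (u - (p • a + r • b)) z =
        sympForm u z - p * sympForm a z - r * sympForm b z := by
      intro p r
      simp only [sympForm, Pi.add_apply, Pi.sub_apply, Pi.smul_apply, smul_eq_mul]; ring
    rw [e2, sf_swap b z, sf_swap a u]
    rw [e1] at k
    field_simp
    linear_combination k
  · rintro ⟨s, t, h⟩ w ⟨h1, h2⟩
    rw [h, sf_comb, sf_swap v.rep, sf_swap x.rep, h1, h2]; simp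

theorem spGraph_every_vertex_regular (F : Type) [Field F] [Fintype F] (q : ℕ)
    (hq : Fintype.card F = q) (v x : ℙ F (Fin 4 → F)) (hxv : x ≠ v)
    (hadj : ¬ (spGraph F).Adj v x) :
    (perp (spGraph F) (perp (spGraph F) {v, x})).ncard = q + 1 ∧
    ∀ y ∈ perp (spGraph F) (perp (spGraph F) {v, x}),
      ∀ z ∈ perp (spGraph F) (perp (spGraph F) {v, x}), ¬ (spGraph F).Adj y z := by
  have hc : sympForm v.rep x.rep ≠ 0 := by
    rw [Ne, ← sf_rel]
    rintro (h | h)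
    · exact hxv h.symm
    · exact hadj h
  have hb0 : x.rep ≠ 0 := x.rep_nonzero
  have hat : ∀ t : F, v.rep + t • x.rep ≠ 0 := by
    intro t h
    have h1 := sf_comb v.rep x.rep x.rep 1 t
    rw [one_smul, h, sf_self] at h1
    apply hc
    simpa [sympForm] using h1.symm
  let f : Option F → ℙ F (Fin 4 → F) := fun o =>
    o.elim (Projectivization.mk F x.rep hb0) (fun t => Projectivization.mk F _ (hat t))
  have hab : ∀ s t : F, s • v.rep + t • x.rep = 0 → s = 0 ∧ t = 0 := by
    intro s t h
    have h1 := sf_comb v.rep x.rep x.rep s t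
    have h2 := sf_comb v.rep x.rep v.rep s t
    rw [h, sf_self] at h1 h2
    rw [sf_swap x.rep v.rep] at h2
    simp [sympForm] at h1 h2
    simp only [sympForm] at hc
    constructor
    · rcases h1 with h1 | h1
      · exact h1
      · exact absurd h1 hc
    · rcases h2 with h2 | h2
      · exact h2
      · exact absurd (by linear_combination -h2) hc
  have hne : ∀ t : F, f none ≠ f (some t) := by
    intro t h
    simp only [f, Option.elim] at h
    rw [Projectivization.mk_eq_mk_iff'] at h
    obtain ⟨r, hr⟩ := h
    have := hab r (r * t - 1) (by
      rw [sub_smul, mul_smul, one_smul, ← sub_eq_zero.2 hr, smul_add]; abel)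
    obtain ⟨h1, h2⟩ := this
    simp [h1] at h2
  have hinj : Function.Injective f := by
    rintro (_ | s) (_ | t) h
    · rfl
    · exact absurd h (hne t)
    · exact absurd h.symm (hne s)
    · simp only [f, Option.elim] at h
      rw [Projectivization.mk_eq_mk_iff'] at h
      obtain ⟨r, hr⟩ := h
      have := hab (r - 1) (r * t - s) (by
        rw [sub_smul, sub_smul, mul_smul, one_smul, ← sub_eq_zero.2 hr, smul_add]; abel)
      obtain ⟨h1, h2⟩ := this
      have : r = 1 := by linear_combination h1
      subst this
      congr 1
      linear_combination -h2
  have hset : perp (spGraph F) (perp (spGraph F) {v, x}) = Set.range f := by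
    ext y
    rw [sf_span v x hc]
    constructor
    · rintro ⟨s, t, h⟩
      by_cases hs : s = 0
      · refine ⟨none, ?_⟩
        rw [← y.mk_rep]
        simp only [f, Option.elim]
        symm
        rw [Projectivization.mk_eq_mk_iff']
        exact ⟨t, by rw [h, hs]; simp⟩
      · refine ⟨some (t / s), ?_⟩
        rw [← y.mk_rep]
        simp only [f, Option.elim]
        symm
        rw [Projectivization.mk_eq_mk_iff']
        exact ⟨s, by rw [h, smul_add, smul_smul, mul_div_cancel₀ _ hs]⟩
    · rintro ⟨_ | t, rfl⟩
      · obtain ⟨r, hr⟩ := Projectivization.exists_smul_eq_mk_rep F x.rep hb0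
        exact ⟨0, r, by simp only [f, Option.elim]; rw [← hr, Units.smul_def]; simp⟩
      · obtain ⟨r, hr⟩ := Projectivization.exists_smul_eq_mk_rep F _ (hat t)
        exact ⟨r, r * t, by
          simp only [f, Option.elim]; rw [← hr, Units.smul_def, smul_add, smul_smul]⟩
  have hmk : ∀ (a b : Fin 4 → F) (ha : a ≠ 0) (hb : b ≠ 0),
      (spGraph F).Adj (Projectivization.mk F a ha) (Projectivization.mk F b hb) →
      sympForm a b = 0 := by
    intro a b ha hb h
    have := (sf_rel _ _).1 (Or.inr h)
    rw [sf_mk, sf_swap, neg_eq_zero, sf_mk, sf_swap, neg_eq_zero] at this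
    exact this
  have hcn : ∀ t, ¬ (spGraph F).Adj (f none) (f (some t)) := by
    intro t h
    have := hmk _ _ _ _ h
    rw [sf_swap, neg_eq_zero, ← one_smul F v.rep, sf_comb, sf_self] at this
    apply hc
    linear_combination this
  rw [hset]
  constructor
  · rw [← Set.image_univ, Set.ncard_image_of_injective _ hinj, Set.ncard_univ,
      Nat.card_eq_fintype_card, Fintype.card_option, hq]
  · rintro _ ⟨_ | s, rfl⟩ _ ⟨_ | t, rfl⟩ h
    · exact h.ne rfl
    · exact hcn t h
    · exact hcn s h.symm
    · have h0 := hmk _ _ _ _ h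
      have e : sympForm (v.rep + s • x.rep) (v.rep + t • x.rep) =
          (t - s) * sympForm v.rep x.rep := by
        simp only [sympForm, Pi.add_apply, Pi.smul_apply, smul_eq_mul]; ring
      rw [e] at h0
      rcases mul_eq_zero.1 h0 with h1 | h1
      · exact h.ne (by rw [sub_eq_zero.1 h1])
      · exact hc h1
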